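/- For the imperfect-polarization Jones matrix Q = [[1, a],[b, c]] with a, b, c ∈ ℂ, the Mueller matrix ξ(Q) = A (Q ⊗ Q*) A⁻¹ equals the explicit matrix whose rows are: row 0 = ((1+|a|²+|b|²+|c|²)/2, (1+|b|²−|a|²−|c|²)/2, Re(a+bc̄), −Im(a−bc̄)); row 1 = ((1+|a|²−|b|²−|c|²)/2, (1+|c|²−|a|²−|b|²)/2, Re(a−bc̄), −Im(a+bc̄)); row 2 = (Re(b+ac̄), Re(b−ac̄), Re(c+ab̄), −Im(c+ab̄)); row 3 = (Im(b−ac̄), Im(b+ac̄), Im(c−ab̄), Re(c−ab̄)). -/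

import Mathlib

open Matrix Complex
open scoped Kronecker Matrix

/-- The matrix `A` relating the Kronecker-product picture to the Mueller picture. -/
noncomputable def muellerA : Matrix (Fin 4) (Fin 4) ℂ :=
  !![1, 0, 0, 1;
     1, 0, 0, -1;
     0, 1, 1, 0;
     0, Complex.I, -Complex.I, 0]

/-- The Mueller matrix `ξ(J) = A (J ⊗ J*) A⁻¹` of a Jones matrix `J`. -/
noncomputable def mueller (J : Matrix (Fin 2) (Fin 2) ℂ) : Matrix (Fin 4) (Fin 4) ℂ :=
  muellerA * (Matrix.reindex finProdFinEquiv finProdFinEquiv (J ⊗ₖ J.map star)) * muellerA⁻¹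

/-!
The rows of `A` are the vectorized Pauli matrices `σᵢ`. They are Hermitian and satisfy
`tr (σᵢ σⱼ) = 2 δᵢⱼ`, so `ξ(J) i j = tr (σᵢ (J σⱼ Jᴴ)) / 2`: column `j` of `ξ(J)` is half the Stokes
vector of the Hermitian matrix `J σⱼ Jᴴ`. The Stokes vector of a Hermitian matrix `H` is
`(H₀₀ + H₁₁, H₀₀ - H₁₁, 2 Re H₁₀, 2 Im H₁₀)`, whence the real and imaginary parts in `ξ(Q)`.
-/

open scoped ComplexConjugate

section VecRows

variable {ι κ m n R : Type*}

/-- The matrix whose rows are the vectorizations of a family of matrices. Since `vec` stacks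
columns, `muellerA` is, up to reindexing, of this form for the Pauli matrices rather than for their
transposes. -/
def vecRows (P : ι → Matrix m n R) : Matrix ι (n × m) R :=
  of fun i ↦ vec (P i)

variable [CommSemiring R] [Star R] [Fintype m]

theorem vecRows_mul_kronecker_map_star (P : ι → Matrix m m R) (J : Matrix m n R) :
    vecRows P * (J ⊗ₖ J.map star) = vecRows fun i ↦ Jᴴ * P i * J := by
  ext i kl
  exact congrFun (vec_vecMul_kronecker (J.map star) (P i) J) kl

variable [Fintype n]

theorem vecRows_mul_conjTranspose_apply (P : ι → Matrix m n R) (Q : κ → Matrix m n R)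
    (i : ι) (j : κ) : (vecRows P * (vecRows Q)ᴴ) i j = trace ((Q j)ᴴ * P i) :=
  (dotProduct_comm _ _).trans (star_vec_dotProduct_vec (Q j) (P i))

theorem vecRows_mul_kronecker_mul_conjTranspose_apply (P : ι → Matrix m m R)
    (Q : κ → Matrix n n R) (J : Matrix m n R) (i : ι) (j : κ) :
    (vecRows P * (J ⊗ₖ J.map star) * (vecRows Q)ᴴ) i j = trace (P i * (J * (Q j)ᴴ * Jᴴ)) := by
  rw [vecRows_mul_kronecker_map_star, vecRows_mul_conjTranspose_apply]
  calc trace ((Q j)ᴴ * (Jᴴ * P i * J))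
      = trace ((Q j)ᴴ * Jᴴ * (P i * J)) := by simp only [Matrix.mul_assoc]
    _ = trace (P i * J * ((Q j)ᴴ * Jᴴ)) := trace_mul_comm _ _
    _ = trace (P i * (J * (Q j)ᴴ * Jᴴ)) := by simp only [Matrix.mul_assoc]

end VecRows

/-- The Pauli matrices, preceded by the identity, in the order of the Stokes parameters of optics:
`1, σ_z, σ_x, σ_y` in the notation of quantum mechanics. -/
noncomputable def pauli : Fin 4 → Matrix (Fin 2) (Fin 2) ℂ :=
  ![1, !![1, 0; 0, -1], !![0, 1; 1, 0], !![0, -I; I, 0]]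

theorem isHermitian_pauli (i : Fin 4) : (pauli i).IsHermitian := by
  ext k l
  fin_cases i <;> fin_cases k <;> fin_cases l <;> simp [pauli]

theorem trace_pauli_mul_pauli (i j : Fin 4) :
    trace (pauli i * pauli j) = if i = j then 2 else 0 := by
  fin_cases i <;> fin_cases j <;> simp [pauli, trace_fin_two, one_add_one_eq_two]

/-- The Stokes vector of a `2 × 2` matrix, read as the coherency matrix of a light beam. -/
noncomputable def stokesVector (H : Matrix (Fin 2) (Fin 2) ℂ) (i : Fin 4) : ℂ :=
  trace (pauli i * H)

theorem stokesVector_apply (H : Matrix (Fin 2) (Fin 2) ℂ) (i : Fin 4) :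
    stokesVector H i =
      ![H 0 0 + H 1 1, H 0 0 - H 1 1, H 0 1 + H 1 0, I * (H 0 1 - H 1 0)] i := by
  rw [stokesVector, trace_fin_two]
  fin_cases i <;> simp [pauli, Matrix.mul_apply] <;> ring

theorem stokesVector_of_isHermitian {H : Matrix (Fin 2) (Fin 2) ℂ} (hH : H.IsHermitian)
    (i : Fin 4) :
    stokesVector H i =
      (![(H 0 0 + H 1 1).re, (H 0 0 - H 1 1).re, 2 * (H 1 0).re, 2 * (H 1 0).im] i : ℝ) := by
  have diag_real (k : Fin 2) : ((H k k).re : ℂ) = H k k := hH.coe_re_apply_self k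
  have offDiag_conj : H 0 1 = conj (H 1 0) := (hH.apply 0 1).symm
  have offDiag_add : H 0 1 + H 1 0 = (2 * (H 1 0).re : ℝ) := by
    rw [offDiag_conj, add_comm, add_conj]
  have offDiag_sub : I * (H 0 1 - H 1 0) = (2 * (H 1 0).im : ℝ) := by
    rw [offDiag_conj, ← neg_sub, sub_conj]
    linear_combination -((2 * (H 1 0).im : ℝ) : ℂ) * I_mul_I
  rw [stokesVector_apply]
  fin_cases i
  · simp [diag_real]
  · simp [diag_real]
  · exact offDiag_add
  · exact offDiag_sub

theorem muellerA_eq_vecRows :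
    muellerA = (vecRows pauli).submatrix id finProdFinEquiv.symm := by
  ext i j
  fin_cases i <;> fin_cases j <;>
    simp [muellerA, vecRows, vec, pauli, finProdFinEquiv, Fin.divNat, Fin.modNat]

theorem muellerA_mul_reindex_mul_conjTranspose (K : Matrix (Fin 2 × Fin 2) (Fin 2 × Fin 2) ℂ) :
    muellerA * reindex finProdFinEquiv finProdFinEquiv K * muellerAᴴ =
      vecRows pauli * K * (vecRows pauli)ᴴ := by
  rw [muellerA_eq_vecRows, reindex_apply, conjTranspose_submatrix, submatrix_mul_equiv,
    submatrix_mul_equiv, submatrix_id_id]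

theorem muellerA_mul_conjTranspose : muellerA * muellerAᴴ = (2 : ℂ) • 1 := by
  rw [muellerA_eq_vecRows, conjTranspose_submatrix, submatrix_mul_equiv, submatrix_id_id]
  ext i j
  rw [vecRows_mul_conjTranspose_apply, (isHermitian_pauli j).eq, trace_pauli_mul_pauli]
  simp [Matrix.one_apply, eq_comm]

theorem muellerA_inv : muellerA⁻¹ = (2⁻¹ : ℂ) • muellerAᴴ := by
  apply inv_eq_right_inv
  rw [mul_smul_comm, muellerA_mul_conjTranspose, inv_smul_smul₀ two_ne_zero]

theorem mueller_apply (J : Matrix (Fin 2) (Fin 2) ℂ) (i j : Fin 4) :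
    mueller J i j = stokesVector (J * pauli j * Jᴴ) i / 2 := by
  rw [mueller, muellerA_inv, mul_smul_comm, muellerA_mul_reindex_mul_conjTranspose,
    Matrix.smul_apply, vecRows_mul_kronecker_mul_conjTranspose_apply, (isHermitian_pauli j).eq,
    stokesVector, smul_eq_mul, inv_mul_eq_div]

theorem mul_pauli_mul_conjTranspose_apply {m : Type*} (J : Matrix m (Fin 2) ℂ) (j : Fin 4)
    (k l : m) :
    (J * pauli j * Jᴴ) k l =
      ![J k 0 * star (J l 0) + J k 1 * star (J l 1),
        J k 0 * star (J l 0) - J k 1 * star (J l 1),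
        J k 0 * star (J l 1) + J k 1 * star (J l 0),
        I * (J k 1 * star (J l 0) - J k 0 * star (J l 1))] j := by
  fin_cases j <;> simp [pauli, Matrix.mul_apply] <;> ring

theorem mueller_imperfect_polarization_general (p a b c : ℂ) :
    mueller !![p, a; b, c] =
      !![(((‖p‖ ^ 2 + ‖a‖ ^ 2 + ‖b‖ ^ 2 + ‖c‖ ^ 2) / 2 : ℝ) : ℂ),
           (((‖p‖ ^ 2 + ‖b‖ ^ 2 - ‖a‖ ^ 2 - ‖c‖ ^ 2) / 2 : ℝ) : ℂ),
           (((a * star p + b * star c).re : ℝ) : ℂ),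
           ((-(a * star p - b * star c).im : ℝ) : ℂ);
         (((‖p‖ ^ 2 + ‖a‖ ^ 2 - ‖b‖ ^ 2 - ‖c‖ ^ 2) / 2 : ℝ) : ℂ),
           (((‖p‖ ^ 2 + ‖c‖ ^ 2 - ‖a‖ ^ 2 - ‖b‖ ^ 2) / 2 : ℝ) : ℂ),
           (((a * star p - b * star c).re : ℝ) : ℂ),
           ((-(a * star p + b * star c).im : ℝ) : ℂ);
         (((b * star p + a * star c).re : ℝ) : ℂ),
           (((b * star p - a * star c).re : ℝ) : ℂ),
           (((c * star p + a * star b).re : ℝ) : ℂ),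
           ((-(c * star p + a * star b).im : ℝ) : ℂ);
         (((b * star p - a * star c).im : ℝ) : ℂ),
           (((b * star p + a * star c).im : ℝ) : ℂ),
           (((c * star p - a * star b).im : ℝ) : ℂ),
           (((c * star p - a * star b).re : ℝ) : ℂ)] := by
  ext i j
  rw [mueller_apply, stokesVector_of_isHermitian
    (isHermitian_mul_mul_conjTranspose _ (isHermitian_pauli j))]
  simp only [mul_pauli_mul_conjTranspose_apply]
  rw [← ofReal_ofNat, ← ofReal_div]
  fin_cases i <;> fin_cases j <;> refine congrArg ofReal ?_ <;>
    simp [Complex.sq_norm, Complex.normSq_apply] <;> ring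

/-- explicit form of the Mueller matrix `ξ(Q)` of the
imperfect-polarization Jones matrix `Q = [[1, a],[b, c]]`. -/
theorem mueller_imperfect_polarization (a b c : ℂ) :
    mueller !![1, a; b, c] =
      !![(((1 + ‖a‖ ^ 2 + ‖b‖ ^ 2 + ‖c‖ ^ 2) / 2 : ℝ) : ℂ),
           (((1 + ‖b‖ ^ 2 - ‖a‖ ^ 2 - ‖c‖ ^ 2) / 2 : ℝ) : ℂ),
           (((a + b * star c).re : ℝ) : ℂ),
           ((-(a - b * star c).im : ℝ) : ℂ);
         (((1 + ‖a‖ ^ 2 - ‖b‖ ^ 2 - ‖c‖ ^ 2) / 2 : ℝ) : ℂ),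
           (((1 + ‖c‖ ^ 2 - ‖a‖ ^ 2 - ‖b‖ ^ 2) / 2 : ℝ) : ℂ),
           (((a - b * star c).re : ℝ) : ℂ),
           ((-(a + b * star c).im : ℝ) : ℂ);
         (((b + a * star c).re : ℝ) : ℂ),
           (((b - a * star c).re : ℝ) : ℂ),
           (((c + a * star b).re : ℝ) : ℂ),
           ((-(c + a * star b).im : ℝ) : ℂ);
         (((b - a * star c).im : ℝ) : ℂ),
           (((b + a * star c).im : ℝ) : ℂ),
           (((c - a * star b).im : ℝ) : ℂ),
           (((c - a * star b).re : ℝ) : ℂ)] := by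
  simpa only [ofReal_one, norm_one, one_pow, star_one, mul_one] using
    mueller_imperfect_polarization_general 1 a b c
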